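/- Let A ∈ ℝ^{m×n} have rank m and let P_u = {x ∈ ℝⁿ : Ax = b, 0 ≤ x ≤ u} for some b ∈ ℝ^m and u ∈ ℝⁿ with u > 0. Then there is an absolute constant C > 0 (independent of m, n, A, b, u) such that the circuit diameter of P_u is at most C · n² · log(n + κ_A). -/

import Mathlib

open Matrix
open scoped BigOperators

noncomputable section
open Classical

/-- The set of elementary vectors of `ker(A)`: support-minimal nonzero kernel vectors. -/
def elemVecs {α β : Type} [Fintype α] [Fintype β] (A : Matrix α β ℝ) : Set (β → ℝ) :=
  {g | A.mulVec g = 0 ∧ g ≠ 0 ∧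
    ∀ h : β → ℝ, A.mulVec h = 0 → h ≠ 0 →
      ¬ ({i | h i ≠ 0} ⊂ {i | g i ≠ 0})}

/-- The circuit imbalance measure `κ_A`. -/
def circImb {α β : Type} [Fintype α] [Fintype β] (A : Matrix α β ℝ) : ℝ :=
  sSup {r : ℝ | ∃ g ∈ elemVecs A, ∃ i j, g i ≠ 0 ∧ g j ≠ 0 ∧ r = |g j| / |g i|}

/-- A circuit walk in `P`: each step adds an elementary vector, and each step is maximal. -/
def IsCircuitWalk {α β : Type} [Fintype α] [Fintype β] (A : Matrix α β ℝ)
    (P : Set (β → ℝ)) {k : ℕ} (x : Fin (k + 1) → β → ℝ) : Prop :=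
  (∀ i, x i ∈ P) ∧
  ∀ i : Fin k, ∃ g ∈ elemVecs A,
    x i.succ = x i.castSucc + g ∧
    ∀ ε : ℝ, 0 < ε → x i.castSucc + (1 + ε) • g ∉ P


namespace CD

set_option linter.unusedSectionVars false

variable {ι : Type} [Fintype ι]

def Elem (W : Submodule ℝ (ι → ℝ)) : Set (ι → ℝ) :=
  {g | g ∈ W ∧ g ≠ 0 ∧ ∀ h : ι → ℝ, h ∈ W → h ≠ 0 → ¬ ({i | h i ≠ 0} ⊂ {i | g i ≠ 0})}

def Conf (h w : ι → ℝ) : Prop :=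
  ∀ i, (0 ≤ h i ∧ h i ≤ w i) ∨ (w i ≤ h i ∧ h i ≤ 0)

lemma ratio (v g : ι → ℝ) (hpos : ∃ i, 0 < g i * v i) :
    ∃ t : ℝ, 0 < t ∧ (∀ i, 0 ≤ (v i - t * g i) * v i) ∧ ∃ i, g i ≠ 0 ∧ v i - t * g i = 0 := by
  classical
  obtain ⟨i0, hi0⟩ := hpos
  obtain ⟨i, hi, hmin⟩ := Finset.exists_min_image (Finset.univ.filter fun i => 0 < g i * v i)
    (fun i => v i / g i) ⟨i0, by simpa using hi0⟩
  simp only [Finset.mem_filter, Finset.mem_univ, true_and] at hi hmin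
  have hg : g i ≠ 0 := by rintro h; simp [h] at hi
  have key : ∀ j, 0 < g j * v j → 0 < v j / g j := by
    intro j hj
    have hgj : g j ≠ 0 := by rintro h; simp [h] at hj
    have : v j / g j = (g j * v j) / (g j)^2 := by field_simp
    rw [this]; positivity
  refine ⟨v i / g i, key i hi, ?_, i, hg, by field_simp; ring⟩
  intro j
  have ht := key i hi
  set t := v i / g i
  by_cases hj : 0 < g j * v j
  · have hgj : g j ≠ 0 := by rintro h; simp [h] at hj
    have h1 := hmin j hj
    have : (v j - t * g j) * v j = (v j / g j - t) * (g j * v j) := by field_simp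
    rw [this]
    exact mul_nonneg (by linarith) hj.le
  · nlinarith [mul_nonneg ht.le (by linarith : 0 ≤ -(g j * v j)), sq_nonneg (v j)]

lemma smul_elem {W : Submodule ℝ (ι → ℝ)} {g : ι → ℝ} (hg : g ∈ Elem W) {t : ℝ} (ht : t ≠ 0) :
    t • g ∈ Elem W := by
  obtain ⟨h1, h2, h3⟩ := hg
  refine ⟨W.smul_mem _ h1, smul_ne_zero ht h2, ?_⟩
  have : {i | (t • g) i ≠ 0} = {i | g i ≠ 0} := by ext i; simp [ht]
  rw [this]; exact h3

lemma exists_sc (W : Submodule ℝ (ι → ℝ)) : ∀ (k : ℕ) (w : ι → ℝ), {i | w i ≠ 0}.ncard ≤ k →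
    w ∈ W → w ≠ 0 → ∃ g ∈ Elem W, ∀ i, (w i = 0 → g i = 0) ∧ 0 ≤ g i * w i := by
  intro k
  induction k with
  | zero =>
    intro w hw _ hne
    exfalso; apply hne
    have : {i | w i ≠ 0} = ∅ := (Set.ncard_eq_zero (Set.toFinite _)).1 (by omega)
    ext i
    by_contra h
    have : i ∈ {i | w i ≠ 0} := h
    simp_all
  | succ k ih =>
    intro w hk hw hne
    by_cases hel : w ∈ Elem W
    · exact ⟨w, hel, fun i => ⟨id, mul_self_nonneg _⟩⟩
    have : ∃ h ∈ W, h ≠ 0 ∧ {i | h i ≠ 0} ⊂ {i | w i ≠ 0} := by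
      by_contra hc
      push Not at hc
      exact hel ⟨hw, hne, fun h h1 h2 => hc h h1 h2⟩
    obtain ⟨h, hhW, hh0, hsub⟩ := this
    have : ∃ h ∈ W, (∃ i, 0 < h i * w i) ∧ {i | h i ≠ 0} ⊂ {i | w i ≠ 0} := by
      obtain ⟨i, hi⟩ : ∃ i, h i ≠ 0 := by
        by_contra hc; push Not at hc; exact hh0 (funext hc)
      have hwi : w i ≠ 0 := hsub.1 hi
      rcases lt_or_gt_of_ne (mul_ne_zero hi hwi) with h1 | h1
      · refine ⟨-h, W.neg_mem hhW, ⟨i, by simp; linarith⟩, ?_⟩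
        simpa using hsub
      · exact ⟨h, hhW, ⟨i, h1⟩, hsub⟩
    obtain ⟨h, hhW, hp, hsub⟩ := this
    obtain ⟨t, ht, h1, i, hi, hi2⟩ := ratio w h hp
    have hz : ∀ j, w j = 0 → h j = 0 := by
      intro j hj; by_contra hc; exact (hsub.1 hc) hj
    obtain ⟨j, hj1, hj2⟩ := Set.exists_of_ssubset hsub
    have hj2 : h j = 0 := by simpa using hj2
    have hlt : {i | (w - t • h) i ≠ 0} ⊂ {i | w i ≠ 0} := by
      refine ⟨fun j hj hc => hj ?_, fun hc => ?_⟩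
      · simp [hc, hz j hc]
      · exact hc (hsub.1 hi) (by simpa using hi2)
    have hcard := Set.ncard_lt_ncard hlt (Set.toFinite _)
    obtain ⟨g, hg, hg2⟩ := ih (w - t • h) (by omega) (W.sub_mem hw (W.smul_mem _ hhW)) (by
      intro hc
      have := congrFun hc j
      simp [hj2] at this
      exact hj1 this)
    refine ⟨g, hg, fun l => ⟨fun hl => (hg2 l).1 (by simp [hl, hz l hl]), ?_⟩⟩
    have h3 := h1 l
    have h4 := hg2 l
    simp only [Pi.sub_apply, Pi.smul_apply, smul_eq_mul] at h4
    set v := w l - t * h l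
    by_cases hv : v = 0
    · rw [h4.1 hv]; simp
    · have : 0 < v^2 := by positivity
      by_contra hc
      push Not at hc
      nlinarith [mul_nonneg h4.2 h3]

lemma exists_conf (W : Submodule ℝ (ι → ℝ)) (w : ι → ℝ) (hw : w ∈ W) (hne : w ≠ 0) :
    ∃ h ∈ Elem W, Conf h w ∧ ∃ i, h i ≠ 0 ∧ h i = w i := by
  obtain ⟨g, hg, hs⟩ := exists_sc W _ w le_rfl hw hne
  obtain ⟨i, hi⟩ : ∃ i, g i ≠ 0 := by
    by_contra hc; push Not at hc; exact hg.2.1 (funext hc)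
  obtain ⟨t, ht, h1, j, hj, hj2⟩ := ratio w g ⟨i, lt_of_le_of_ne (hs i).2
    (mul_ne_zero hi (fun hc => hi ((hs i).1 hc))).symm⟩
  refine ⟨t • g, smul_elem hg ht.ne', ?_, j, by simp [hj, ht.ne'], by simp; linarith⟩
  intro l
  simp only [Pi.smul_apply, smul_eq_mul]
  have h2 := h1 l
  have h3 := (hs l).2
  rcases lt_trichotomy (w l) 0 with h | h | h
  · right
    have a1 : w l - t * g l ≤ 0 := by by_contra hc; push Not at hc; nlinarith
    have a2 : g l ≤ 0 := by by_contra hc; push Not at hc; nlinarith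
    exact ⟨by linarith, by nlinarith⟩
  · left; simp [(hs l).1 h, h]
  · left
    have a1 : 0 ≤ w l - t * g l := by by_contra hc; push Not at hc; nlinarith
    have a2 : 0 ≤ g l := by by_contra hc; push Not at hc; nlinarith
    exact ⟨by positivity, by linarith⟩

lemma conf_abs {h w : ι → ℝ} (hc : Conf h w) (i : ι) : |w i| = |h i| + |(w - h) i| := by
  simp only [Pi.sub_apply]
  rcases hc i with h1 | h1
  · rw [abs_of_nonneg (by linarith), abs_of_nonneg h1.1, abs_of_nonneg (by linarith)]; ring
  · rw [abs_of_nonpos (by linarith), abs_of_nonpos h1.2, abs_of_nonpos (by linarith)]; ring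

lemma conf_supp {h w : ι → ℝ} (hc : Conf h w) (hi : ∃ i, h i ≠ 0 ∧ h i = w i) :
    {i | (w - h) i ≠ 0}.ncard < {i | w i ≠ 0}.ncard := by
  obtain ⟨i, hi, hi2⟩ := hi
  apply Set.ncard_lt_ncard _ (Set.toFinite _)
  refine ⟨fun j hj hw => hj ?_, fun hs => ?_⟩
  · rcases hc j with h1 | h1 <;> simp <;> linarith
  · exact hs (show w i ≠ 0 by rwa [← hi2]) (by simp [hi2])

lemma conf_trans {h w : ι → ℝ} (hc : Conf h w) {g : ι → ℝ} (hg : Conf g (w - h)) : Conf g w := by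
  intro i
  have := hg i
  simp only [Pi.sub_apply] at this
  rcases hc i with h1 | h1 <;> rcases this with h2 | h2
  · left; constructor <;> linarith
  · left; constructor <;> linarith
  · right; constructor <;> linarith
  · right; constructor <;> linarith

lemma prox (W : Submodule ℝ (ι → ℝ)) (N : Finset ι) (κ : ℝ) (hκ0 : 0 ≤ κ)
    (hκ : ∀ g ∈ Elem W, ∀ i j, g i ≠ 0 → |g j| ≤ κ * |g i|)
    (hN : ∀ g ∈ W, g ≠ 0 → ∃ i ∈ N, g i ≠ 0) :
    ∀ (k : ℕ) (w : ι → ℝ), {i | w i ≠ 0}.ncard ≤ k → w ∈ W →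
      ∀ i, |w i| ≤ κ * ∑ j ∈ N, |w j| := by
  intro k
  induction k with
  | zero =>
    intro w hk hw i
    have : {i | w i ≠ 0} = ∅ := (Set.ncard_eq_zero (Set.toFinite _)).1 (by omega)
    have : w i = 0 := by
      by_contra h
      have : i ∈ {i | w i ≠ 0} := h
      simp_all
    rw [this]; simp; positivity
  | succ k ih =>
    intro w hk hw i
    by_cases hne : w = 0
    · simp [hne]
    obtain ⟨h, hh, hc, hi⟩ := exists_conf W w hw hne
    have h1 := conf_supp hc hi
    have h2 := ih (w - h) (by omega) (W.sub_mem hw hh.1) i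
    obtain ⟨j, hj, hj2⟩ := hN h hh.1 hh.2.1
    have h3 : |h i| ≤ κ * ∑ j ∈ N, |h j| := by
      refine (hκ h hh j i hj2).trans ?_
      exact mul_le_mul_of_nonneg_left
        (Finset.single_le_sum (f := fun j => |h j|) (fun _ _ => abs_nonneg _) hj) hκ0
    have : ∑ j ∈ N, |w j| = ∑ j ∈ N, |h j| + ∑ j ∈ N, |(w - h) j| := by
      rw [← Finset.sum_add_distrib]; exact Finset.sum_congr rfl fun j _ => conf_abs hc j
    rw [conf_abs hc i, this, mul_add]
    linarith

lemma pick (W : Submodule ℝ (ι → ℝ)) (N : Finset ι) :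
    ∀ (k : ℕ) (w : ι → ℝ), {i | w i ≠ 0}.ncard ≤ k → w ∈ W → w ≠ 0 →
      ∃ h ∈ Elem W, Conf h w ∧ ∑ j ∈ N, |w j| ≤ k * ∑ j ∈ N, |h j| := by
  intro k
  induction k with
  | zero =>
    intro w hk hw hne
    exfalso; apply hne
    have : {i | w i ≠ 0} = ∅ := (Set.ncard_eq_zero (Set.toFinite _)).1 (by omega)
    ext i
    by_contra h
    have : i ∈ {i | w i ≠ 0} := h
    simp_all
  | succ k ih =>
    intro w hk hw hne
    obtain ⟨h, hh, hc, hi⟩ := exists_conf W w hw hne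
    have h1 := conf_supp hc hi
    have hsum : ∑ j ∈ N, |w j| = ∑ j ∈ N, |h j| + ∑ j ∈ N, |(w - h) j| := by
      rw [← Finset.sum_add_distrib]; exact Finset.sum_congr rfl fun j _ => conf_abs hc j
    have hp : 0 ≤ ∑ j ∈ N, |h j| := Finset.sum_nonneg fun _ _ => abs_nonneg _
    by_cases h0 : w - h = 0
    · refine ⟨h, hh, hc, ?_⟩
      rw [hsum, h0]; simp
      nlinarith [mul_nonneg (Nat.cast_nonneg (α := ℝ) k) hp]
    obtain ⟨g, hg, hgc, hgs⟩ := ih (w - h) (by omega) (W.sub_mem hw hh.1) h0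
    rcases le_total (∑ j ∈ N, |h j|) (∑ j ∈ N, |g j|) with hle | hle
    · refine ⟨g, hg, conf_trans hc hgc, ?_⟩
      rw [hsum]; push_cast; linarith
    · refine ⟨h, hh, hc, ?_⟩
      rw [hsum]; push_cast
      nlinarith [mul_le_mul_of_nonneg_left hle (Nat.cast_nonneg (α := ℝ) k)]

def Step (W : Submodule ℝ (ι → ℝ)) (x y : ι → ℝ) : Prop :=
  ∃ g ∈ Elem W, y = x + g ∧ 0 ≤ y ∧ ∀ ε : ℝ, 0 < ε → ¬ (0 ≤ x + (1 + ε) • g)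

lemma step_exists (W : Submodule ℝ (ι → ℝ)) (N : Finset ι) (κ : ℝ) (hκ0 : 1 ≤ κ)
    (hκ : ∀ g ∈ Elem W, ∀ i j, g i ≠ 0 → |g j| ≤ κ * |g i|)
    (hN : ∀ g ∈ W, g ≠ 0 → ∃ i ∈ N, g i ≠ 0)
    (z : ι → ℝ) (hz : 0 ≤ z) (hNz : ∀ i, i ∈ N ↔ z i = 0) (c : ℝ) (hc : c = Fintype.card ι)
    (x : ι → ℝ) (hx : 0 ≤ x) (hxW : z - x ∈ W) (hne : x ≠ z) :
    ∃ y, Step W x y ∧ z - y ∈ W ∧ 0 < ∑ i ∈ N, x i ∧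
      c * ∑ i ∈ N, y i ≤ (c - 1) * ∑ i ∈ N, x i ∧
      (∀ i, x i ≤ c * z i → y i ≤ c * z i) ∧
      ∃ i, (¬ (x i ≤ c * z i) ∧ y i ≤ c * z i) ∨
        (0 < z i ∧ z i ≤ κ * ∑ i ∈ N, x i ∧ ∑ i ∈ N, x i ≤ c ^ 3 * κ * z i) := by
  classical
  have hw0 : z - x ≠ 0 := fun h => hne (sub_eq_zero.1 h).symm
  have hprox : ∀ y : ι → ℝ, 0 ≤ y → z - y ∈ W → ∀ i, |z i - y i| ≤ κ * ∑ j ∈ N, y j := by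
    intro y hy hyW i
    have := prox W N κ (by linarith) hκ hN _ (z - y) le_rfl hyW i
    have e : ∑ j ∈ N, |(z - y) j| = ∑ j ∈ N, y j := by
      refine Finset.sum_congr rfl fun j hj => ?_
      simp [(hNz j).1 hj, abs_of_nonneg (hy j)]
    rw [e] at this
    exact this
  obtain ⟨h, hh, hcf, hsum⟩ := pick W N (Fintype.card ι) (z - x)
    (by rw [← Nat.card_eq_fintype_card]; exact Set.ncard_le_card _) hxW hw0
  have e : ∑ j ∈ N, |(z - x) j| = ∑ j ∈ N, x j := by
    refine Finset.sum_congr rfl fun j hj => ?_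
    simp [(hNz j).1 hj, abs_of_nonneg (hx j)]
  rw [e, ← hc] at hsum
  have hNle : ∀ j ∈ N, h j ≤ 0 := by
    intro j hj
    have h1 := hcf j
    have h2 := hx j
    simp [(hNz j).1 hj] at h1 h2
    rcases h1 with h1 | h1 <;> linarith
  have e2 : ∑ j ∈ N, |h j| = - ∑ j ∈ N, h j := by
    rw [← Finset.sum_neg_distrib]
    exact Finset.sum_congr rfl fun j hj => abs_of_nonpos (hNle j hj)
  obtain ⟨j0, hj0, hj0n⟩ := hN h hh.1 hh.2.1
  have hj0lt : h j0 < 0 := lt_of_le_of_ne (hNle j0 hj0) hj0n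
  have hcard1 : 1 ≤ c := by
    rw [hc]; exact_mod_cast Fintype.card_pos_iff.2 ⟨j0⟩
  -- step length
  obtain ⟨i, hi, hmin⟩ := Finset.exists_min_image (Finset.univ.filter fun i => h i < 0)
    (fun i => x i / (- h i)) ⟨j0, by simpa using hj0lt⟩
  simp only [Finset.mem_filter, Finset.mem_univ, true_and] at hi hmin
  set α := x i / (- h i) with hα
  have hαi : x i + α * h i = 0 := by
    have hne' : h i ≠ 0 := hi.ne
    rw [hα]; field_simp; ring
  have hcfi : ∀ j, h j < 0 → z j - x j ≤ h j := by
    intro j hj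
    rcases hcf j with h1 | h1
    · linarith
    · exact h1.1
  have hα1 : 1 ≤ α := by
    rw [hα, le_div_iff₀ (by linarith)]
    have := hcfi i hi
    have h0 : 0 ≤ z i := hz i
    linarith
  have hy0 : 0 ≤ x + α • h := by
    intro j
    simp only [Pi.zero_apply, Pi.add_apply, Pi.smul_apply, smul_eq_mul]
    have hxj : 0 ≤ x j := hx j
    by_cases hj : h j < 0
    · have := hmin j hj
      rw [le_div_iff₀ (by linarith)] at this
      linarith
    · push Not at hj
      have : 0 ≤ α * h j := by positivity
      linarith
  have hyW : z - (x + α • h) ∈ W := by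
    have : z - (x + α • h) = (z - x) - α • h := by abel
    rw [this]; exact W.sub_mem hxW (W.smul_mem _ hh.1)
  have hfy : ∑ j ∈ N, (x + α • h) j = ∑ j ∈ N, x j - α * ∑ j ∈ N, |h j| := by
    rw [e2]; simp [Finset.sum_add_distrib, Finset.mul_sum]
  have hfy0 : 0 ≤ ∑ j ∈ N, (x + α • h) j := Finset.sum_nonneg fun j _ => hy0 j
  have hsh : 0 < ∑ j ∈ N, |h j| := 
    Finset.sum_pos' (fun _ _ => abs_nonneg _) ⟨j0, hj0, abs_pos.2 hj0n⟩
  have hfx : 0 < ∑ j ∈ N, x j := by nlinarith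
  have hαc : α ≤ c := by
    by_contra hcon; push Not at hcon
    nlinarith
  have hylt : ∑ j ∈ N, (x + α • h) j ≤ ∑ j ∈ N, x j := by
    rw [hfy]; nlinarith
  refine ⟨x + α • h, ⟨α • h, smul_elem hh (by linarith), rfl, hy0, ?_⟩, hyW, hfx, ?_, ?_, i, ?_⟩
  · intro ε hε hcon
    have := hcon i
    simp only [Pi.zero_apply, Pi.add_apply, Pi.smul_apply, smul_eq_mul] at this
    have : (0:ℝ) < ε * α * (- h i) := by
      apply mul_pos (by positivity) (by linarith)
    nlinarith
  · rw [hfy]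
    nlinarith [mul_nonneg (by linarith : 0 ≤ α - 1) hsh.le, mul_nonneg (mul_nonneg (by linarith : 0 ≤ c) (by linarith : 0 ≤ α - 1)) hsh.le]
  · intro j hj
    simp only [Pi.add_apply, Pi.smul_apply, smul_eq_mul]
    have hzj : 0 ≤ z j := hz j
    have hcj := hcf j
    simp only [Pi.sub_apply] at hcj
    rcases hcj with h1 | h1
    · have : α * h j ≤ c * (z j - x j) :=
        mul_le_mul hαc h1.2 h1.1 (by linarith)
      have hxj : 0 ≤ x j := hx j
      nlinarith
    · have : α * h j ≤ 0 := mul_nonpos_of_nonneg_of_nonpos (by linarith) h1.2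
      linarith
  · have hzi : 0 ≤ z i := hz i
    have hxi := hcfi i hi
    by_cases hR : x i ≤ c * z i
    · right
      have hzpos : 0 < z i := by
        by_contra hcon
        have : z i = 0 := by linarith
        rw [this] at hR hxi
        linarith
      refine ⟨hzpos, ?_, ?_⟩
      · have := hprox _ hy0 hyW i
        simp only [Pi.add_apply, Pi.smul_apply, smul_eq_mul, hαi, sub_zero] at this
        have h2 := le_abs_self (z i)
        have h3 : κ * ∑ j ∈ N, (x + α • h) j ≤ κ * ∑ j ∈ N, x j :=
          mul_le_mul_of_nonneg_left hylt (by linarith)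
        simp only [Pi.add_apply, Pi.smul_apply, smul_eq_mul] at h3
        linarith
      · have b1 : ∑ j ∈ N, |h j| ≤ c * (κ * |h i|) := by
          calc ∑ j ∈ N, |h j| ≤ ∑ j ∈ N, κ * |h i| :=
                Finset.sum_le_sum fun j _ => hκ h hh i j hi.ne
            _ = N.card * (κ * |h i|) := by simp
            _ ≤ c * (κ * |h i|) := by
                apply mul_le_mul_of_nonneg_right _ (by positivity)
                rw [hc]; exact_mod_cast Finset.card_le_univ N
        have b2 : |h i| ≤ c * z i := by
          rw [abs_of_neg hi]; linarith
        calc ∑ j ∈ N, x j ≤ c * ∑ j ∈ N, |h j| := hsum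
          _ ≤ c * (c * (κ * (c * z i))) := by gcongr; exact b1.trans (by gcongr)
          _ = _ := by ring
    · left
      refine ⟨hR, ?_⟩
      simp only [Pi.add_apply, Pi.smul_apply, smul_eq_mul, hαi]
      positivity

lemma phi_step (T c κ z f f' : ℝ) (hc : 1 ≤ c) (hκ : 0 ≤ κ) (hz : 0 ≤ z) (hf' : 0 < f')
    (hd : c * f' ≤ (c - 1) * f) :
    max 0 (min T (1 + c * Real.log (κ / z * f'))) ≤ max 0 (min T (1 + c * Real.log (κ / z * f))) := by
  have hff : f' ≤ f := by nlinarith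
  rcases eq_or_lt_of_le (div_nonneg hκ hz) with h | h
  · rw [← h]; simp
  · gcongr

lemma phi_drop (T c κ z f f' : ℝ) (hc : 1 ≤ c) (hκ : 1 ≤ κ) (hz : 0 < z) (hf' : 0 < f')
    (hd : c * f' ≤ (c - 1) * f) (h1 : z ≤ κ * f) (h2 : f ≤ c ^ 3 * κ * z)
    (hT : 1 + c * Real.log (κ ^ 2 * c ^ 3) ≤ T) :
    max 0 (min T (1 + c * Real.log (κ / z * f'))) + 1 ≤
      max 0 (min T (1 + c * Real.log (κ / z * f))) := by
  have hf : 0 < f := by nlinarith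
  have hg1 : 1 ≤ κ / z * f := by
    rw [div_mul_eq_mul_div, le_div_iff₀ hz]; linarith
  have hg2 : κ / z * f ≤ κ ^ 2 * c ^ 3 := by
    rw [div_mul_eq_mul_div, div_le_iff₀ hz]
    nlinarith [mul_le_mul_of_nonneg_left h2 (by linarith : 0 ≤ κ)]
  have hl0 : 0 ≤ Real.log (κ / z * f) := Real.log_nonneg hg1
  have hl1 : Real.log (κ / z * f) ≤ Real.log (κ ^ 2 * c ^ 3) := Real.log_le_log (by linarith) hg2
  have hl2 : c * Real.log (κ / z * f') ≤ c * Real.log (κ / z * f) - 1 := by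
    have e : κ / z * f' = κ / z * f * (f' / f) := by field_simp
    have hq : 0 < f' / f := by positivity
    rw [e, Real.log_mul (by linarith) hq.ne']
    have := Real.log_le_sub_one_of_pos hq
    have h4 : c * (f' / f) ≤ c - 1 := by
      rw [← mul_div_assoc, div_le_iff₀ hf]; exact hd
    nlinarith
  have hle : 1 + c * Real.log (κ / z * f) ≤ T := by nlinarith
  have hn : 0 ≤ c * Real.log (κ / z * f) := by positivity
  have hm : max 0 (1 + c * Real.log (κ / z * f)) = 1 + c * Real.log (κ / z * f) :=
    max_eq_right (by linarith)
  rw [min_eq_right hle, hm]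
  have : max 0 (min T (1 + c * Real.log (κ / z * f'))) ≤ c * Real.log (κ / z * f) := by
    apply max_le hn
    exact (min_le_right _ _).trans (by linarith)
  linarith

def Phi (N : Finset ι) (c κ T : ℝ) (z x : ι → ℝ) : ℝ :=
  ∑ i, ((if x i ≤ c * z i then (0:ℝ) else 1) +
    max 0 (min T (1 + c * Real.log (κ / z i * ∑ j ∈ N, x j))))

lemma Phi_nonneg (N : Finset ι) (c κ T : ℝ) (z x : ι → ℝ) : 0 ≤ Phi N c κ T z x := by
  unfold Phi
  refine Finset.sum_nonneg fun i _ => add_nonneg ?_ (le_max_left _ _)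
  split_ifs <;> norm_num

lemma Phi_le (N : Finset ι) (c κ T : ℝ) (hT : 0 ≤ T) (z x : ι → ℝ) :
    Phi N c κ T z x ≤ Fintype.card ι * (1 + T) := by
  unfold Phi
  calc _ ≤ ∑ i : ι, (1 + T) := by
        refine Finset.sum_le_sum fun i _ => add_le_add ?_ (max_le hT (min_le_left _ _))
        split_ifs <;> norm_num
    _ = _ := by simp; ring

lemma drop_exists (W : Submodule ℝ (ι → ℝ)) (N : Finset ι) (κ : ℝ) (hκ0 : 1 ≤ κ)
    (hκ : ∀ g ∈ Elem W, ∀ i j, g i ≠ 0 → |g j| ≤ κ * |g i|)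
    (hN : ∀ g ∈ W, g ≠ 0 → ∃ i ∈ N, g i ≠ 0)
    (z : ι → ℝ) (hz : 0 ≤ z) (hNz : ∀ i, i ∈ N ↔ z i = 0) (c : ℝ) (hc : c = Fintype.card ι)
    (hc1 : 1 ≤ c)
    (T : ℝ) (hT : 1 + c * Real.log (κ ^ 2 * c ^ 3) ≤ T)
    (x : ι → ℝ) (hx : 0 ≤ x) (hxW : z - x ∈ W) (hne : x ≠ z) :
    ∃ y, Step W x y ∧ 0 ≤ y ∧ z - y ∈ W ∧ (y = z ∨ Phi N c κ T z y + 1 ≤ Phi N c κ T z x) := by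
  obtain ⟨y, hs, hyW, hfx, hd, hR, i, hi⟩ := step_exists W N κ hκ0 hκ hN z hz hNz c hc x hx hxW hne
  have hy0 : 0 ≤ y := by obtain ⟨g, _, _, h, _⟩ := hs; exact h
  refine ⟨y, hs, hy0, hyW, ?_⟩
  by_cases hyz : y = z
  · exact Or.inl hyz
  right
  obtain ⟨_, _, _, hfy, _⟩ := step_exists W N κ hκ0 hκ hN z hz hNz c hc y hy0 hyW hyz
  have a1 : ∀ i, (if y i ≤ c * z i then (0:ℝ) else 1) ≤ (if x i ≤ c * z i then (0:ℝ) else 1) := by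
    intro i
    by_cases h : x i ≤ c * z i
    · rw [if_pos h, if_pos (hR i h)]
    · rw [if_neg h]; split_ifs <;> norm_num
  have a2 := fun i => phi_step T c κ (z i) _ _ hc1 (by linarith) (hz i) hfy hd
  unfold Phi
  rw [← Finset.add_sum_erase _ _ (Finset.mem_univ i), ← Finset.add_sum_erase _ _ (Finset.mem_univ i)]
  have a3 := Finset.sum_le_sum (s := Finset.univ.erase i) fun j _ => add_le_add (a1 j) (a2 j)
  have a4 : ((if y i ≤ c * z i then (0:ℝ) else 1) +
      max 0 (min T (1 + c * Real.log (κ / z i * ∑ j ∈ N, y j)))) + 1 ≤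
      ((if x i ≤ c * z i then (0:ℝ) else 1) +
      max 0 (min T (1 + c * Real.log (κ / z i * ∑ j ∈ N, x j)))) := by
    rcases hi with ⟨h1, h2⟩ | ⟨h1, h2, h3⟩
    · rw [if_neg h1, if_pos h2]
      linarith [a2 i]
    · have := phi_drop T c κ (z i) _ _ hc1 hκ0 h1 hfy hd h2 h3 hT
      linarith [a1 i]
  linarith

lemma walk_exists (W : Submodule ℝ (ι → ℝ)) (N : Finset ι) (κ : ℝ) (hκ0 : 1 ≤ κ)
    (hκ : ∀ g ∈ Elem W, ∀ i j, g i ≠ 0 → |g j| ≤ κ * |g i|)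
    (hN : ∀ g ∈ W, g ≠ 0 → ∃ i ∈ N, g i ≠ 0)
    (z : ι → ℝ) (hz : 0 ≤ z) (hNz : ∀ i, i ∈ N ↔ z i = 0) (c : ℝ) (hc : c = Fintype.card ι)
    (hc1 : 1 ≤ c)
    (T : ℝ) (hT : 1 + c * Real.log (κ ^ 2 * c ^ 3) ≤ T) :
    ∀ (k : ℕ) (x : ι → ℝ), 0 ≤ x → z - x ∈ W → Phi N c κ T z x ≤ k →
    ∃ (l : ℕ) (w : ℕ → ι → ℝ), l ≤ k + 1 ∧ w 0 = x ∧ w l = z ∧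
      (∀ i ≤ l, 0 ≤ w i ∧ z - w i ∈ W) ∧ ∀ i < l, Step W (w i) (w (i + 1)) := by
  intro k
  induction k with
  | zero =>
    intro x hx hxW hP
    by_cases hne : x = z
    · exact ⟨0, fun _ => x, by omega, rfl, hne, fun i _ => ⟨hx, hxW⟩, fun i hi => by omega⟩
    obtain ⟨y, hs, hy, hyW, h | h⟩ :=
      drop_exists W N κ hκ0 hκ hN z hz hNz c hc hc1 T hT x hx hxW hne
    · refine ⟨1, fun i => if i = 0 then x else y, by omega, by simp, by simp [h], ?_, ?_⟩
      · intro i _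
        dsimp only
        split_ifs
        · exact ⟨hx, hxW⟩
        · exact ⟨hy, hyW⟩
      · intro i hi
        have : i = 0 := by omega
        subst this
        simpa using hs
    · have := Phi_nonneg N c κ T z y
      push_cast at hP
      linarith
  | succ k ih =>
    intro x hx hxW hP
    by_cases hne : x = z
    · exact ⟨0, fun _ => x, by omega, rfl, hne, fun i _ => ⟨hx, hxW⟩, fun i hi => by omega⟩
    obtain ⟨y, hs, hy, hyW, h⟩ :=
      drop_exists W N κ hκ0 hκ hN z hz hNz c hc hc1 T hT x hx hxW hne
    have : ∃ (l : ℕ) (w : ℕ → ι → ℝ), l ≤ k + 1 ∧ w 0 = y ∧ w l = z ∧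
      (∀ i ≤ l, 0 ≤ w i ∧ z - w i ∈ W) ∧ ∀ i < l, Step W (w i) (w (i + 1)) := by
      rcases h with h | h
      · exact ⟨0, fun _ => y, by omega, rfl, h, fun i _ => ⟨hy, hyW⟩, fun i hi => by omega⟩
      · exact ih y hy hyW (by push_cast at hP; linarith)
    obtain ⟨l, w, hl, hw0, hwl, hw1, hw2⟩ := this
    refine ⟨l + 1, fun i => Nat.casesOn i x w, by omega, rfl, hwl, ?_, ?_⟩
    · rintro (_ | i) hi
      · exact ⟨hx, hxW⟩
      · exact hw1 i (by omega)
    · rintro (_ | i) hi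
      · simpa [hw0] using hs
      · exact hw2 i (by omega)

end CD

open CD

def slackW {m n : ℕ} (A : Matrix (Fin m) (Fin n) ℝ) : Submodule ℝ (Fin n ⊕ Fin n → ℝ) where
  carrier := {v | A.mulVec (fun i => v (Sum.inl i)) = 0 ∧ ∀ i, v (Sum.inr i) = - v (Sum.inl i)}
  zero_mem' := by
    refine ⟨?_, by simp⟩
    exact Matrix.mulVec_zero A
  add_mem' := by
    rintro a b ⟨h1, h2⟩ ⟨h3, h4⟩
    refine ⟨?_, fun i => by simp [h2, h4]; ring⟩
    have := Matrix.mulVec_add A (fun i => a (Sum.inl i)) (fun i => b (Sum.inl i))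
    rw [h1, h3, add_zero] at this
    exact this
  smul_mem' := by
    rintro t a ⟨h1, h2⟩
    refine ⟨?_, fun i => by simp [h2]⟩
    have := Matrix.mulVec_smul A t (fun i => a (Sum.inl i))
    rw [h1, smul_zero] at this
    exact this

lemma slack_elem {m n : ℕ} (A : Matrix (Fin m) (Fin n) ℝ) (v : Fin n ⊕ Fin n → ℝ)
    (hv : v ∈ Elem (slackW A)) : (fun i => v (Sum.inl i)) ∈ elemVecs A := by
  obtain ⟨⟨h1, h2⟩, h3, h4⟩ := hv
  refine ⟨h1, ?_, ?_⟩
  · intro hc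
    apply h3
    ext (i | i)
    · exact congrFun hc i
    · rw [h2]; have := congrFun hc i; simp at this; simp [this]
  · intro h hA h0 hs
    refine h4 (Sum.elim h (-h)) ⟨by simpa using hA, by simp⟩ ?_ ?_
    · intro hc; apply h0; ext i; exact congrFun hc (Sum.inl i)
    · obtain ⟨hs1, hs2⟩ := hs
      refine ⟨?_, fun hc => hs2 ?_⟩
      · rintro (i | i) hi
        · exact hs1 hi
        · have : h i ≠ 0 := by simpa using hi
          have := hs1 this
          simpa [h2] using this
      · intro i hi
        exact hc (a := Sum.inl i) hi

lemma circ_bdd {m n : ℕ} (A : Matrix (Fin m) (Fin n) ℝ) :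
    BddAbove {r : ℝ | ∃ g ∈ elemVecs A, ∃ i j, g i ≠ 0 ∧ g j ≠ 0 ∧ r = |g j| / |g i|} := by
  classical
  let G : Set (Fin n) → (Fin n → ℝ) := fun S =>
    if h : ∃ g ∈ elemVecs A, {i | g i ≠ 0} = S then h.choose else 0
  let F : Set (Fin n) × Fin n × Fin n → ℝ := fun p => |G p.1 p.2.2| / |G p.1 p.2.1|
  refine ((Set.finite_range F).subset ?_).bddAbove
  rintro r ⟨g, hg, i, j, hi, hj, rfl⟩
  refine ⟨⟨{i | g i ≠ 0}, i, j⟩, ?_⟩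
  have hex : ∃ g' ∈ elemVecs A, {i | g' i ≠ 0} = {i | g i ≠ 0} := ⟨g, hg, rfl⟩
  have hG : G {i | g i ≠ 0} = hex.choose := dif_pos hex
  obtain ⟨hq1, hq2⟩ := hex.choose_spec
  show |G {i | g i ≠ 0} j| / |G {i | g i ≠ 0} i| = _
  rw [hG]
  set q := hex.choose
  have hqi : q i ≠ 0 := by
    have : i ∈ {i | q i ≠ 0} := by rw [hq2]; exact hi
    exact this
  have hz : g - (g i / q i) • q = 0 := by
    by_contra hne
    refine hg.2.2 (g - (g i / q i) • q) ?_ hne ⟨?_, ?_⟩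
    · rw [Matrix.mulVec_sub, Matrix.mulVec_smul, hg.1, hq1.1]; simp
    · intro l hl hc
      apply hl
      have : q l = 0 := by
        by_contra hq
        have : l ∈ {i | g i ≠ 0} := by rw [← hq2]; exact hq
        exact this hc
      simp [hc, this]
    · intro hs
      exact hs hi (by simp [hqi])
  have hg' : ∀ l, g l = (g i / q i) * q l := by
    intro l
    have := congrFun hz l
    simp at this; linarith
  rw [hg' j, abs_mul, abs_div]
  have : |g i| ≠ 0 := abs_ne_zero.2 hi
  have : |q i| ≠ 0 := abs_ne_zero.2 hqi
  field_simp

lemma vertex_prop {m n : ℕ} (A : Matrix (Fin m) (Fin n) ℝ) (b : Fin m → ℝ) (u y : Fin n → ℝ)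
    (hy : y ∈ Set.extremePoints ℝ {z : Fin n → ℝ | A.mulVec z = b ∧ 0 ≤ z ∧ z ≤ u})
    (g : Fin n ⊕ Fin n → ℝ) (hg : g ∈ slackW A) (hg0 : g ≠ 0) :
    ∃ i, Sum.elim y (u - y) i = 0 ∧ g i ≠ 0 := by
  by_contra hcon
  push Not at hcon
  obtain ⟨⟨hA, h0, hu⟩, hext⟩ := hy
  set z := Sum.elim y (u - y) with hzdef
  have hz : ∀ i, 0 ≤ z i := by
    rintro (i | i)
    · exact h0 i
    · simp [hzdef]; exact hu i
  have hev : ∀ i, ∀ᶠ δ in nhdsWithin (0:ℝ) (Set.Ioi 0), δ * |g i| ≤ z i := by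
    intro i
    by_cases hgi : g i = 0
    · simp [hgi, hz i]
    · have hzi : 0 < z i := lt_of_le_of_ne (hz i) fun h => hgi (hcon i h.symm)
      have hgp : 0 < |g i| := abs_pos.2 hgi
      filter_upwards [Ioo_mem_nhdsGT (div_pos hzi hgp)] with δ hδ
      have := hδ.2.le
      rwa [le_div_iff₀ hgp] at this
  have hev2 := (Filter.eventually_all.2 hev).and self_mem_nhdsWithin
  obtain ⟨δ, hδ, hδ0⟩ := hev2.exists
  have hδ0 : 0 < δ := hδ0
  set p : Fin n → ℝ := fun i => g (Sum.inl i) with hp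
  have hmem : ∀ s : ℝ, |s| = δ → y + s • p ∈ {z : Fin n → ℝ | A.mulVec z = b ∧ 0 ≤ z ∧ z ≤ u} := by
    intro s hs
    refine ⟨?_, ?_, ?_⟩
    · rw [Matrix.mulVec_add, Matrix.mulVec_smul, hA, hg.1]; simp
    · intro i
      have h1 := hδ (Sum.inl i)
      rw [← hs, ← abs_mul] at h1
      have := neg_abs_le (s * g (Sum.inl i))
      simp only [hzdef, Sum.elim_inl] at h1
      simp [hp]; linarith
    · intro i
      have h1 := hδ (Sum.inr i)
      rw [← hs, ← abs_mul, hg.2, mul_neg, abs_neg] at h1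
      have := le_abs_self (s * g (Sum.inl i))
      simp only [hzdef, Sum.elim_inr, Pi.sub_apply] at h1
      simp [hp]; linarith
  have := hext (hmem δ (abs_of_pos hδ0)) (hmem (-δ) (by rw [abs_neg, abs_of_pos hδ0])) (by
    refine ⟨1/2, 1/2, by norm_num, by norm_num, by norm_num, ?_⟩
    ext i; simp; ring)
  have hp0 : ∀ i, p i = 0 := by
    intro i
    have := congrFun this i
    simp [hδ0.ne'] at this
    exact this
  apply hg0
  ext (i | i)
  · exact hp0 i
  · rw [hg.2]; have := hp0 i; simp [hp] at this; simp [this]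

lemma final_arith (n : ℕ) (hn : 1 ≤ n) (κ : ℝ) (hκ : 1 ≤ κ) (l k : ℕ)
    (hl : l ≤ k + 1)
    (hk : (k : ℝ) ≤ (2 * n : ℝ) * (1 + (1 + (2 * n : ℝ) * Real.log (κ ^ 2 * (2 * n : ℝ) ^ 3))) + 1) :
    (l : ℝ) ≤ 44 * (n : ℝ) ^ 2 * Real.log ((n : ℝ) + κ) := by
  have hn' : (1:ℝ) ≤ n := by exact_mod_cast hn
  have hl' : (l : ℝ) ≤ k + 1 := by exact_mod_cast hl
  set L := Real.log ((n : ℝ) + κ) with hL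
  have h2 : Real.log 2 ≤ L := Real.log_le_log (by norm_num) (by linarith)
  have h2' := Real.log_two_gt_d9
  have hκL : Real.log κ ≤ L := Real.log_le_log (by linarith) (by linarith)
  have hnL : Real.log n ≤ L := Real.log_le_log (by linarith) (by linarith)
  have e : Real.log (κ ^ 2 * (2 * n : ℝ) ^ 3) = 2 * Real.log κ + 3 * (Real.log 2 + Real.log n) := by
    rw [Real.log_mul (by positivity) (by positivity), Real.log_pow, Real.log_pow,
      Real.log_mul (by norm_num) (by positivity)]
    norm_num
  have h8 : Real.log (κ ^ 2 * (2 * n : ℝ) ^ 3) ≤ 8 * L := by rw [e]; linarith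
  have hb : (n:ℝ)^2 * Real.log (κ ^ 2 * (2 * n : ℝ) ^ 3) ≤ n^2 * (8 * L) := by gcongr
  have hnn : (n:ℝ) ≤ n^2 := by nlinarith
  have hc : (n:ℝ)^2 * (1/2) ≤ n^2 * L := by gcongr; linarith
  nlinarith

theorem circuit_diameter_bound_capacitated_quadratic :
    ∃ C : ℝ, 0 < C ∧
      ∀ (m n : ℕ) (A : Matrix (Fin m) (Fin n) ℝ) (b : Fin m → ℝ) (u : Fin n → ℝ),
        A.rank = m →
        (∀ i, 0 < u i) →
        ∀ x y : Fin n → ℝ,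
          x ∈ Set.extremePoints ℝ {z : Fin n → ℝ | A.mulVec z = b ∧ 0 ≤ z ∧ z ≤ u} →
          y ∈ Set.extremePoints ℝ {z : Fin n → ℝ | A.mulVec z = b ∧ 0 ≤ z ∧ z ≤ u} →
          ∃ (k : ℕ) (w : Fin (k + 1) → Fin n → ℝ),
            IsCircuitWalk A {z : Fin n → ℝ | A.mulVec z = b ∧ 0 ≤ z ∧ z ≤ u} w ∧
            w 0 = x ∧ w (Fin.last k) = y ∧
            (k : ℝ) ≤ C * (n : ℝ) ^ 2 * Real.log ((n : ℝ) + circImb A) := by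
  refine ⟨44, by norm_num, ?_⟩
  intro m n A b u _ hu x y hx hy
  by_cases hxy : x = y
  · refine ⟨0, fun _ => x, ⟨fun _ => hx.1, fun i => i.elim0⟩, rfl, hxy, ?_⟩
    have h0 : 0 ≤ circImb A := by
      apply Real.sSup_nonneg
      rintro r ⟨g, _, i, j, _, _, rfl⟩
      positivity
    have : 0 ≤ Real.log ((n : ℝ) + circImb A) := by
      rcases Nat.eq_zero_or_pos n with h | h
      · subst h
        have : circImb A = 0 := by
          unfold circImb
          have : {r : ℝ | ∃ g ∈ elemVecs A, ∃ i j, g i ≠ 0 ∧ g j ≠ 0 ∧ r = |g j| / |g i|} = ∅ := by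
            ext r; simp
          rw [this, Real.sSup_empty]
        simp [this]
      · apply Real.log_nonneg
        have : (1:ℝ) ≤ n := by exact_mod_cast h
        linarith
    push_cast
    positivity
  obtain ⟨i0, hi0⟩ : ∃ i, x i ≠ y i := by
    by_contra hc; push Not at hc; exact hxy (funext hc)
  have hn : 1 ≤ n := by have := i0.2; omega
  have hn' : (1:ℝ) ≤ n := by exact_mod_cast hn
  set W := slackW A with hW
  have hκ : ∀ g ∈ Elem W, ∀ i j, g i ≠ 0 → |g j| ≤ circImb A * |g i| := by
    intro g hg
    have hgA := slack_elem A g hg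
    have base : ∀ i j : Fin n, g (Sum.inl i) ≠ 0 →
        |g (Sum.inl j)| ≤ circImb A * |g (Sum.inl i)| := by
      intro i j hi
      by_cases hj : g (Sum.inl j) = 0
      · rw [hj, abs_zero]
        refine mul_nonneg ?_ (abs_nonneg _)
        apply Real.sSup_nonneg
        rintro r ⟨g, _, i, j, _, _, rfl⟩
        positivity
      · have hle := le_csSup (circ_bdd A) ⟨_, hgA, i, j, hi, hj, rfl⟩
        rwa [div_le_iff₀ (abs_pos.2 hi)] at hle
    have hneg : ∀ i, |g (Sum.inr i)| = |g (Sum.inl i)| := by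
      intro i; rw [hg.1.2, abs_neg]
    have hneg' : ∀ i, g (Sum.inr i) ≠ 0 → g (Sum.inl i) ≠ 0 := by
      intro i hi hc; apply hi; rw [hg.1.2, hc, neg_zero]
    rintro (i | i) (j | j) hi
    · exact base i j hi
    · rw [hneg]; exact base i j hi
    · rw [hneg]; exact base i j (hneg' i hi)
    · rw [hneg, hneg]; exact base i j (hneg' i hi)
  set z := Sum.elim y (u - y) with hz
  set X := Sum.elim x (u - x) with hX
  have hXW : z - X ∈ W := by
    refine ⟨?_, fun i => by simp [hz, hX]⟩
    have : (fun i => (z - X) (Sum.inl i)) = y - x := by ext i; simp [hz, hX]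
    rw [this, Matrix.mulVec_sub, hx.1.1, hy.1.1, sub_self]
  have hne : z - X ≠ 0 := by
    intro hc
    have := congrFun hc (Sum.inl i0)
    simp [hz, hX] at this
    apply hi0; linarith
  have hκ1 : 1 ≤ circImb A := by
    obtain ⟨g, hg, _, i, hi, _⟩ := exists_conf W _ hXW hne
    have := hκ g hg i i hi
    have h2 := abs_pos.2 hi
    by_contra hc
    push Not at hc
    nlinarith
  have hpos : ∀ p : Fin n → ℝ, 0 ≤ p → p ≤ u → 0 ≤ Sum.elim p (u - p) := by
    intro p h1 h2
    rintro (i | i)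
    · exact h1 i
    · have := h2 i
      simpa using this
  have hc : ((2 * n : ℝ)) = Fintype.card (Fin n ⊕ Fin n) := by simp; ring
  set N : Finset (Fin n ⊕ Fin n) := Finset.univ.filter fun i => z i = 0 with hN
  set T : ℝ := 1 + (2 * n : ℝ) * Real.log (circImb A ^ 2 * (2 * n : ℝ) ^ 3) with hT
  have hT0 : 0 ≤ T := by
    have : 0 ≤ Real.log (circImb A ^ 2 * (2 * n : ℝ) ^ 3) := by
      apply Real.log_nonneg
      exact one_le_mul_of_one_le_of_one_le (one_le_pow₀ hκ1) (one_le_pow₀ (by linarith))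
    positivity
  set k := ⌈(2 * n : ℝ) * (1 + T)⌉₊ with hk
  obtain ⟨l, w, hl, hw0, hwl, hw1, hw2⟩ := walk_exists W N (circImb A) hκ1 hκ
    (by
      intro g hg hg0
      obtain ⟨i, h1, h2⟩ := vertex_prop A b u y hy g hg hg0
      exact ⟨i, by rw [hN, Finset.mem_filter]; exact ⟨Finset.mem_univ _, h1⟩, h2⟩)
    z (hpos y hy.1.2.1 hy.1.2.2) (by simp [hN]) (2 * n : ℝ) hc (by linarith) T le_rfl k X
    (hpos x hx.1.2.1 hx.1.2.2) hXW (by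
      refine (Phi_le N _ _ T hT0 z X).trans ?_
      rw [← hc]
      exact Nat.le_ceil _)
  have hslack : ∀ i ≤ l, ∀ j, w i (Sum.inr j) = u j - w i (Sum.inl j) := by
    intro i hi j
    have := (hw1 i hi).2.2 j
    simp [hz] at this
    linarith
  refine ⟨l, fun i j => w i (Sum.inl j), ⟨?_, ?_⟩, ?_, ?_, ?_⟩
  · intro i
    have hi : (i : ℕ) ≤ l := by have := i.2; omega
    obtain ⟨h1, h2⟩ := hw1 i hi
    refine ⟨?_, fun j => h1 (Sum.inl j), fun j => ?_⟩
    · have h3 := h2.1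
      have : (fun j => (z - w i) (Sum.inl j)) = y - fun j => w i (Sum.inl j) := by
        ext j; simp [hz]
      rw [this, Matrix.mulVec_sub, hy.1.1, sub_eq_zero] at h3
      exact h3.symm
    · have h4 := h1 (Sum.inr j)
      rw [hslack i hi j] at h4
      simp at h4
      exact h4
  · intro i
    obtain ⟨g, hg, h1, h2, h3⟩ := hw2 i i.2
    refine ⟨_, slack_elem A g hg, ?_, ?_⟩
    · ext j
      have := congrFun h1 (Sum.inl j)
      simpa using this
    · intro ε hε hcon
      apply h3 ε hε
      obtain ⟨_, c1, c2⟩ := hcon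
      rintro (j | j)
      · have := c1 j
        simpa using this
      · have := c2 j
        have hs := hslack i i.2.le j
        have hgj := hg.1.2 j
        simp at this
        simp [hs, hgj]
        linarith
  · ext j; simp [hw0, hX]
  · ext j; simp [hwl, hz]
  · apply final_arith n hn _ hκ1 l k hl
    exact (Nat.ceil_lt_add_one (by positivity)).le
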